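/- arXiv:2301.07387 — 3 statements merged into one kernel-verified Lean document; each statement's English description precedes it below -/
import Mathlib

section
/- For every integer p ≥ 2 and all ρ, σ, τ ∈ ℂ, each of the generator matrices R₁, R₂, R₃ lies in SU(H): for j = 1, 2, 3 one has Rⱼ^† · H · Rⱼ = H (where † denotes conjugate transpose) and det(Rⱼ) = 1. -/
open Matrix

noncomputable section

/-- `u = exp(2πi/(3p))`. -/
def uPar (p : ℕ) : ℂ := Complex.exp (2 * Real.pi * Complex.I / (3 * p))

/-- `α = 2 − u³ − conj(u)³`. -/
def alphaPar (p : ℕ) : ℂ :=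
  2 - uPar p ^ 3 - starRingEnd ℂ (uPar p) ^ 3

/-- `βⱼ = (conj(u)² − u)·ρⱼ`. -/
def betaPar (p : ℕ) (t : ℂ) : ℂ := (starRingEnd ℂ (uPar p) ^ 2 - uPar p) * t

/-- The Hermitian matrix `H` of the triangle group `T(p,(ρ,σ,τ))`. -/
def Hmat (p : ℕ) (ρ σ τ : ℂ) : Matrix (Fin 3) (Fin 3) ℂ :=
  !![alphaPar p, betaPar p ρ, starRingEnd ℂ (betaPar p τ);
     starRingEnd ℂ (betaPar p ρ), alphaPar p, betaPar p σ;
     betaPar p τ, starRingEnd ℂ (betaPar p σ), alphaPar p]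

/-- The generator `R₁`. -/
def R1mat (p : ℕ) (ρ σ τ : ℂ) : Matrix (Fin 3) (Fin 3) ℂ :=
  !![uPar p ^ 2, ρ, -(uPar p) * starRingEnd ℂ τ;
     0, starRingEnd ℂ (uPar p), 0;
     0, 0, starRingEnd ℂ (uPar p)]

/-- The generator `R₂`. -/
def R2mat (p : ℕ) (ρ σ τ : ℂ) : Matrix (Fin 3) (Fin 3) ℂ :=
  !![starRingEnd ℂ (uPar p), 0, 0;
     -(uPar p) * starRingEnd ℂ ρ, uPar p ^ 2, σ;
     0, 0, starRingEnd ℂ (uPar p)]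

/-- The generator `R₃`. -/
def R3mat (p : ℕ) (ρ σ τ : ℂ) : Matrix (Fin 3) (Fin 3) ℂ :=
  !![starRingEnd ℂ (uPar p), 0, 0;
     0, starRingEnd ℂ (uPar p), 0;
     τ, -(uPar p) * starRingEnd ℂ σ, uPar p ^ 2]

end

/-- Each generator `Rⱼ` lies in `SU(H)`: it preserves the Hermitian form given by
`H` and has determinant `1`. -/
theorem stmt8 (p : ℕ) (hp : 2 ≤ p) (ρ σ τ : ℂ) :
    ((R1mat p ρ σ τ)ᴴ * Hmat p ρ σ τ * R1mat p ρ σ τ = Hmat p ρ σ τ ∧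
      (R1mat p ρ σ τ).det = 1) ∧
    ((R2mat p ρ σ τ)ᴴ * Hmat p ρ σ τ * R2mat p ρ σ τ = Hmat p ρ σ τ ∧
      (R2mat p ρ σ τ).det = 1) ∧
    ((R3mat p ρ σ τ)ᴴ * Hmat p ρ σ τ * R3mat p ρ σ τ = Hmat p ρ σ τ ∧
      (R3mat p ρ σ τ).det = 1) := by
  have hu : uPar p * starRingEnd ℂ (uPar p) = 1 := by
    unfold uPar
    rw [← Complex.exp_conj, ← Complex.exp_add]
    simp [neg_div, Complex.conj_ofNat]
  simp only [R1mat, R2mat, R3mat, Hmat, alphaPar, betaPar]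
  generalize uPar p = u at *
  refine ⟨⟨?_, ?_⟩, ⟨?_, ?_⟩, ⟨?_, ?_⟩⟩
  any_goals
    rw [Matrix.det_fin_three]
    simp
    grind
  all_goals
    ext i j
    fin_cases i <;> fin_cases j <;>
      simp [Matrix.mul_apply, Fin.sum_univ_three, Matrix.conjTranspose_apply] <;> grind
end

section
/- For every integer p ≥ 2 and all ρ, σ, τ ∈ ℂ, the matrix Rⱼ equals conj(u) times the complex reflection with center the standard basis vector eⱼ and multiplier u³ with respect to the Hermitian form defined by H: for j = 1, 2, 3 and every x ∈ ℂ³, Rⱼ · x = conj(u) · ( x + (u³ − 1) · ((H·x)ⱼ / α) · eⱼ ), where (H·x)ⱼ is the j-th entry of H·x and α = 2 − u³ − conj(u)³ is nonzero. -/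
open Matrix

noncomputable section

/-- The generators `R₁`, `R₂`, `R₃`, indexed by `j : Fin 3`. -/
def Rmat (p : ℕ) (ρ σ τ : ℂ) : Fin 3 → Matrix (Fin 3) (Fin 3) ℂ :=
  ![!![uPar p ^ 2, ρ, -(uPar p) * starRingEnd ℂ τ;
      0, starRingEnd ℂ (uPar p), 0;
      0, 0, starRingEnd ℂ (uPar p)],
    !![starRingEnd ℂ (uPar p), 0, 0;
      -(uPar p) * starRingEnd ℂ ρ, uPar p ^ 2, σ;
      0, 0, starRingEnd ℂ (uPar p)],
    !![starRingEnd ℂ (uPar p), 0, 0;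
      0, starRingEnd ℂ (uPar p), 0;
      τ, -(uPar p) * starRingEnd ℂ σ, uPar p ^ 2]]

end

/-- `u` times its conjugate is `1`. -/
theorem uPar_mul_conj (p : ℕ) : uPar p * starRingEnd ℂ (uPar p) = 1 := by
  unfold uPar
  rw [← Complex.exp_conj, ← Complex.exp_add]
  have h2 : starRingEnd ℂ (2 : ℂ) = 2 := Complex.conj_ofNat 2
  have h3 : starRingEnd ℂ (3 : ℂ) = 3 := Complex.conj_ofNat 3
  simp [Complex.conj_ofReal, neg_div, h2, h3]

/-- `u³ ≠ 1`. -/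
theorem uPar_cube_ne (p : ℕ) (hp : 2 ≤ p) : uPar p ^ 3 ≠ 1 := by
  have h0 : (p : ℂ) ≠ 0 := by
    have : p ≠ 0 := by omega
    exact_mod_cast this
  have h : uPar p ^ 3 = Complex.exp (2 * Real.pi * Complex.I / p) := by
    unfold uPar
    rw [← Complex.exp_nat_mul]
    congr 1
    push_cast
    field_simp
  rw [h]
  exact (Complex.isPrimitiveRoot_exp p (by omega)).ne_one (by omega)

/-- `Rⱼ` is `conj(u)` times the complex reflection with center `eⱼ` and multiplier
`u³` with respect to the Hermitian form defined by `H`: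
`Rⱼ·x = conj(u)·(x + (u³−1)·((H·x)ⱼ/α)·eⱼ)`, and `α ≠ 0`. -/
theorem stmt9 (p : ℕ) (hp : 2 ≤ p) (ρ σ τ : ℂ) :
    alphaPar p ≠ 0 ∧
    ∀ (j : Fin 3) (x : Fin 3 → ℂ),
      (Rmat p ρ σ τ j).mulVec x =
        starRingEnd ℂ (uPar p) •
          (x + ((uPar p ^ 3 - 1) * ((Hmat p ρ σ τ).mulVec x j / alphaPar p)) •
            Pi.single j 1) := by
  have huv := uPar_mul_conj p
  have hu := uPar_cube_ne p hp
  have hα : alphaPar p = (uPar p ^ 3 - 1) * (starRingEnd ℂ (uPar p) ^ 3 - 1) := by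
    have h3 : uPar p ^ 3 * starRingEnd ℂ (uPar p) ^ 3 = 1 := by
      rw [← mul_pow, huv, one_pow]
    unfold alphaPar
    linear_combination -h3
  have hv : starRingEnd ℂ (uPar p) ^ 3 - 1 ≠ 0 := by
    intro h
    apply hu
    have := congrArg (starRingEnd ℂ) h
    simp at this
    linear_combination this
  have hu' : uPar p ^ 3 - 1 ≠ 0 := sub_ne_zero.mpr hu
  refine ⟨by rw [hα]; exact mul_ne_zero hu' hv, ?_⟩
  intro j x
  have key : ∀ y : ℂ, (uPar p ^ 3 - 1) * (y / alphaPar p) =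
      y / (starRingEnd ℂ (uPar p) ^ 3 - 1) := by
    intro y
    rw [hα]
    field_simp
  rw [key]
  have main : ∀ a b c X Y Z : ℂ, a = alphaPar p →
      uPar p ^ 2 * X + b * Y + -(uPar p) * c * Z = starRingEnd ℂ (uPar p) *
        (X + (a * X + (starRingEnd ℂ (uPar p) ^ 2 - uPar p) * b * Y
          + (uPar p ^ 2 - starRingEnd ℂ (uPar p)) * c * Z)
          / (starRingEnd ℂ (uPar p) ^ 3 - 1)) := by
    intro a b c X Y Z ha
    rw [ha, hα]
    generalize starRingEnd ℂ (uPar p) = v at *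
    generalize uPar p = w at *
    apply mul_right_cancel₀ hv
    rw [mul_assoc v, add_mul X, div_mul_cancel₀ _ hv]
    linear_combination (-(v ^ 3 - 1) * w ^ 2 * X + b * Y - (v ^ 2 + w) * c * Z) * huv
  funext i
  fin_cases j <;> fin_cases i <;>
    simp [Rmat, Hmat, betaPar, Matrix.mulVec, dotProduct, Fin.sum_univ_three]
  · linear_combination main _ ρ (starRingEnd ℂ τ) (x 0) (x 1) (x 2) rfl
  · linear_combination main _ σ (starRingEnd ℂ ρ) (x 1) (x 2) (x 0) rfl
  · linear_combination main _ τ (starRingEnd ℂ σ) (x 2) (x 0) (x 1) rfl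
end

section
/- Let ρ = 1 + ((−1 + i·√3)/2)·((1 + √5)/2), σ = 1, τ = 1 (the parameter S₂), and let p = 4 or p = 5. Then the lattice T(p, S₂) is generated by the union of two mirror stabilizers: the subgroup of GL(3,ℂ) generated by Stab(m₁) ∪ Stab(m₂) equals T(p, S₂), where m₁ is the mirror of the complex reflection R₁ and m₂ = span_ℂ{e₁, R₂·e₃} is the mirror of the complex reflection (R₁·R₂R₃R₂⁻¹)⁵. -/
open Matrix

noncomputable section

/-- The generator `R₁` of `T(p,(ρ,σ,τ))`. -/
def R1T (p : ℕ) (ρ σ τ : ℂ) : Matrix (Fin 3) (Fin 3) ℂ :=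
  !![uPar p ^ 2, ρ, -(uPar p) * starRingEnd ℂ τ;
     0, starRingEnd ℂ (uPar p), 0;
     0, 0, starRingEnd ℂ (uPar p)]

/-- The generator `R₂` of `T(p,(ρ,σ,τ))`. -/
def R2T (p : ℕ) (ρ σ τ : ℂ) : Matrix (Fin 3) (Fin 3) ℂ :=
  !![starRingEnd ℂ (uPar p), 0, 0;
     -(uPar p) * starRingEnd ℂ ρ, uPar p ^ 2, σ;
     0, 0, starRingEnd ℂ (uPar p)]

/-- The generator `R₃` of `T(p,(ρ,σ,τ))`. -/
def R3T (p : ℕ) (ρ σ τ : ℂ) : Matrix (Fin 3) (Fin 3) ℂ :=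
  !![starRingEnd ℂ (uPar p), 0, 0;
     0, starRingEnd ℂ (uPar p), 0;
     τ, -(uPar p) * starRingEnd ℂ σ, uPar p ^ 2]

/-- The linear functional `x ↦ a·x₁ + b·x₂ + c·x₃` on `ℂ³`. -/
def lfun (a b c : ℂ) : (Fin 3 → ℂ) →ₗ[ℂ] ℂ :=
  a • (LinearMap.proj 0 : (Fin 3 → ℂ) →ₗ[ℂ] ℂ) +
    b • (LinearMap.proj 1 : (Fin 3 → ℂ) →ₗ[ℂ] ℂ) +
    c • (LinearMap.proj 2 : (Fin 3 → ℂ) →ₗ[ℂ] ℂ)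

/-- The mirror of `R₁`: `{x ∈ ℂ³ : α·x₁ + β₁·x₂ + conj(β₃)·x₃ = 0}`,
the `H`-orthogonal complement of `e₁`. -/
def mirror1T (p : ℕ) (ρ σ τ : ℂ) : Submodule ℂ (Fin 3 → ℂ) :=
  LinearMap.ker (lfun (alphaPar p) (betaPar p ρ) (starRingEnd ℂ (betaPar p τ)))

/-- The stabilizer of a subspace `m` of `ℂ³` inside a subgroup `S` of `GL(3,ℂ)`:
the set of elements of `S` mapping `m` onto itself. -/
def mirrorStab (S : Subgroup (GL (Fin 3) ℂ)) (m : Submodule ℂ (Fin 3 → ℂ)) :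
    Set (GL (Fin 3) ℂ) :=
  {g | g ∈ S ∧ m.map (Matrix.mulVecLin (g : Matrix (Fin 3) (Fin 3) ℂ)) = m}

end


/-- The explicit matrix of `A = R₂R₃R₂⁻¹` (with `v = conj u`, `s = conj ρ`). -/
theorem braid5_aux (u v r s : ℂ) (huv : u * v = 1) (h1 : r * s = 2)
    (h2 : (2 - r - s) ^ 2 = (2 - r - s) + 1)
    (M A : Matrix (Fin 3) (Fin 3) ℂ)
    (hM : M = !![u ^ 2, r, -u; 0, v, 0; 0, 0, v])
    (hA : A = !![v, 0, 0; u * (1 - s), 0, u ^ 3; 1 - s, -v ^ 2, v + u ^ 2]) :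
    M * A * M * A * M = A * M * A * M * A := by
  have hP : M * A = !![u * (1 - s) * (r - 1) + u, v, u ^ 3 * r - 1 - u ^ 3;
      1 - s, 0, u ^ 2; v * (1 - s), -v ^ 3, v ^ 2 + u] := by
    subst hM hA
    ext i j
    fin_cases i <;> fin_cases j <;>
      simp [Matrix.mul_apply, Fin.sum_univ_three] <;> grind
  have e1 : M * A * M * A * M = (M * A) * ((M * A) * M) := by simp only [Matrix.mul_assoc]
  have e2 : A * M * A * M * A = (A * (M * A)) * (M * A) := by simp only [Matrix.mul_assoc]
  rw [e1, e2, hP]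
  subst hM hA
  ext i j
  fin_cases i <;> fin_cases j <;>
    simp [Matrix.mul_apply, Fin.sum_univ_three] <;> grind

theorem braid_group_aux {G : Type*} [Group G] (a b c A : G) (hA : A * b = b * c)
    (h23 : b * c * b = c * b * c) (h13 : a * c * a = c * a * c)
    (h12 : a * b * a * b = b * a * b * a)
    (h5 : a * A * a * A * a = A * a * A * a * A) :
    Commute (a * A * a * A * a * (b * a * c)) a ∧ Commute (b * a * b) a ∧
      c = (b * a * b)⁻¹ * (b * a * c) * A ∧ b = c * A * c⁻¹ := by
  have hcA : c * A = b * c := by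
    apply mul_right_cancel (b := b)
    rw [mul_assoc, hA, ← mul_assoc, ← h23]
  refine ⟨?_, ?_, ?_, ?_⟩
  · change _ * _ = _ * _
    calc a * A * a * A * a * (b * a * c) * a = a * A * a * A * a * b * (a * c * a) := by group
      _ = a * A * a * A * a * (b * c) * (a * c) := by rw [h13]; group
      _ = a * A * a * A * a * (A * b) * (a * c) := by rw [hA]
      _ = a * (A * a * A * a * A) * (b * a * c) := by group
      _ = _ := by rw [← h5]; group
  · change _ * _ = _ * _
    rw [← h12]; group
  · have : b * a * c * A = b * a * b * c := by
      rw [mul_assoc, hcA]; group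
    rw [mul_assoc, this]; group
  · rw [hcA]; group

/-- An invertible matrix scaling a functional preserves its kernel. -/
theorem map_ker_aux (f : (Fin 3 → ℂ) →ₗ[ℂ] ℂ) (g : GL (Fin 3) ℂ) (k : ℂ) (hk : k ≠ 0)
    (h : ∀ x, f ((g : Matrix (Fin 3) (Fin 3) ℂ).mulVec x) = k * f x) :
    (LinearMap.ker f).map (Matrix.mulVecLin (g : Matrix (Fin 3) (Fin 3) ℂ)) =
      LinearMap.ker f := by
  ext y
  simp only [Submodule.mem_map, LinearMap.mem_ker, Matrix.mulVecLin_apply]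
  constructor
  · rintro ⟨x, hx, rfl⟩
    rw [h, hx, mul_zero]
  · intro hy
    have e : (g : Matrix (Fin 3) (Fin 3) ℂ).mulVec
        (((g⁻¹ : GL (Fin 3) ℂ) : Matrix (Fin 3) (Fin 3) ℂ).mulVec y) = y := by
      rw [Matrix.mulVec_mulVec, ← Units.val_mul, mul_inv_cancel]
      simp
    refine ⟨_, ?_, e⟩
    have := h (((g⁻¹ : GL (Fin 3) ℂ) : Matrix (Fin 3) (Fin 3) ℂ).mulVec y)
    rw [e, hy] at this
    exact (mul_eq_zero.mp this.symm).resolve_left hk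

/-- Elements commuting with `r` preserve the eigenspaces of `r`. -/
theorem map_eig_aux (r g : GL (Fin 3) ℂ) (v : ℂ) (m : Submodule ℂ (Fin 3 → ℂ))
    (hm : ∀ x, x ∈ m ↔ (r : Matrix (Fin 3) (Fin 3) ℂ).mulVec x = v • x)
    (h : Commute g r) :
    m.map (Matrix.mulVecLin (g : Matrix (Fin 3) (Fin 3) ℂ)) = m := by
  have key : ∀ g : GL (Fin 3) ℂ, Commute g r → ∀ x ∈ m,
      (g : Matrix (Fin 3) (Fin 3) ℂ).mulVec x ∈ m := by
    intro g hg x hx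
    rw [hm] at hx ⊢
    rw [Matrix.mulVec_mulVec, ← Units.val_mul, ← hg.eq, Units.val_mul,
      ← Matrix.mulVec_mulVec, hx, Matrix.mulVec_smul]
  ext y
  simp only [Submodule.mem_map, Matrix.mulVecLin_apply]
  constructor
  · rintro ⟨x, hx, rfl⟩
    exact key g h x hx
  · intro hy
    refine ⟨_, key g⁻¹ h.inv_left y hy, ?_⟩
    rw [Matrix.mulVec_mulVec, ← Units.val_mul, mul_inv_cancel]
    simp

/-- For the parameter `S₂ = (1 + ((−1+i√3)/2)·((1+√5)/2), 1, 1)` and `p = 4` or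
`5`, the lattice `T(p,S₂)` is generated by the union of the stabilizers of the
mirror of `R₁` and of the mirror `span{e₁, R₂·e₃}` of the complex reflection
`(R₁·R₂R₃R₂⁻¹)⁵`. -/
theorem stmt19 (p : ℕ) (hp : p = 4 ∨ p = 5)
    (ρ σ τ : ℂ)
    (hρ : ρ = 1 + ((-1 + Complex.I * Real.sqrt 3) / 2) * ((1 + Real.sqrt 5) / 2))
    (hσ : σ = 1) (hτ : τ = 1)
    (r₁ r₂ r₃ : GL (Fin 3) ℂ)
    (hr₁ : (↑r₁ : Matrix (Fin 3) (Fin 3) ℂ) = R1T p ρ σ τ)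
    (hr₂ : (↑r₂ : Matrix (Fin 3) (Fin 3) ℂ) = R2T p ρ σ τ)
    (hr₃ : (↑r₃ : Matrix (Fin 3) (Fin 3) ℂ) = R3T p ρ σ τ) :
    Subgroup.closure
        (mirrorStab (Subgroup.closure {r₁, r₂, r₃}) (mirror1T p ρ σ τ) ∪
          mirrorStab (Subgroup.closure {r₁, r₂, r₃})
            (Submodule.span ℂ
              {Pi.single 0 1, (R2T p ρ σ τ).mulVec (Pi.single 2 1)})) =
      Subgroup.closure {r₁, r₂, r₃} := by
  classical
  subst hσ hτ
  obtain ⟨u, hu⟩ : ∃ u, uPar p = u := ⟨_, rfl⟩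
  obtain ⟨v, hv⟩ : ∃ v, starRingEnd ℂ u = v := ⟨_, rfl⟩
  obtain ⟨s, hs⟩ : ∃ s, starRingEnd ℂ ρ = s := ⟨_, rfl⟩
  have hp0 : (p : ℝ) ≠ 0 := by rcases hp with rfl | rfl <;> norm_num
  have huE : u = Complex.exp ((2 * Real.pi / (3 * p) : ℝ) * Complex.I) := by
    rw [← hu, uPar]; congr 1; push_cast; ring
  have huv : u * v = 1 := by
    rw [← hv, Complex.mul_conj, Complex.normSq_eq_norm_sq, huE, Complex.norm_exp_ofReal_mul_I]
    simp
  have hu3 : u ^ 2 - v ≠ 0 := by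
    intro h0
    have h3 : u ^ 3 = 1 := by linear_combination u * h0 + huv
    rw [← hu, uPar, ← Complex.exp_nat_mul, Complex.exp_eq_one_iff] at h3
    obtain ⟨n, hn⟩ := h3
    have hpi : (2 * Real.pi * Complex.I : ℂ) ≠ 0 := by
      simp [Real.pi_ne_zero]
    have hpc : (p : ℂ) ≠ 0 := by exact_mod_cast hp0
    have h4 : (1 : ℂ) = n * p := by
      apply mul_left_cancel₀ hpi
      field_simp at hn
      push_cast at hn
      linear_combination (2 * Real.pi * Complex.I / 3) * hn
    have h5 : (1 : ℤ) = n * p := by exact_mod_cast h4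
    rcases hp with rfl | rfl <;> push_cast at h5 <;> omega
  have hsq3 : ((Real.sqrt 3 : ℝ) : ℂ) ^ 2 = 3 := by
    rw [← Complex.ofReal_pow, Real.sq_sqrt (by norm_num)]; norm_num
  have hsq5 : ((Real.sqrt 5 : ℝ) : ℂ) ^ 2 = 5 := by
    rw [← Complex.ofReal_pow, Real.sq_sqrt (by norm_num)]; norm_num
  have hsE : s = 1 + ((-1 - Complex.I * Real.sqrt 3) / 2) * ((1 + Real.sqrt 5) / 2) := by
    rw [← hs, hρ]
    simp only [map_add, map_mul, map_div₀, map_neg, map_one, Complex.conj_I,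
      Complex.conj_ofReal, Complex.conj_ofNat]
    ring
  have hI := Complex.I_sq
  have h1 : ρ * s = 2 := by rw [hρ, hsE]; grind
  have h2 : (2 - ρ - s) ^ 2 = (2 - ρ - s) + 1 := by rw [hρ, hsE]; grind
  clear hρ hsE
  have hv0 : v ≠ 0 := right_ne_zero_of_mul_eq_one huv
  rw [R1T, hu, hv, map_one, mul_one] at hr₁
  have hm1 : ∀ x, x ∈ mirror1T p ρ 1 1 ↔
      (r₁ : Matrix (Fin 3) (Fin 3) ℂ).mulVec x = v • x := by
    intro x
    have hk : v ^ 2 - u ≠ 0 := by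
      intro h0; apply hu3
      linear_combination (-u) * h0 + v * huv
    have hvu : starRingEnd ℂ v = u := by rw [← hv, Complex.conj_conj]
    have hl : x ∈ mirror1T p ρ 1 1 ↔ (u ^ 2 - v) * x 0 + ρ * x 1 - u * x 2 = 0 := by
      rw [mirror1T, LinearMap.mem_ker]
      simp only [lfun, alphaPar, betaPar, hu, hv, map_mul, map_sub, map_pow, hvu, map_one,
        mul_one, LinearMap.add_apply, LinearMap.smul_apply, LinearMap.proj_apply, smul_eq_mul]
      have e : (2 - u ^ 3 - v ^ 3) * x 0 + (v ^ 2 - u) * ρ * x 1 + (u ^ 2 - v) * x 2 =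
          (v ^ 2 - u) * ((u ^ 2 - v) * x 0 + ρ * x 1 - u * x 2) := by
        grind
      rw [e, mul_eq_zero, or_iff_right hk]
    rw [hl, hr₁]
    constructor
    · intro h
      ext i
      fin_cases i
      · simp [Matrix.mulVec, dotProduct, Fin.sum_univ_three]
        linear_combination h
      · simp [Matrix.mulVec, dotProduct, Fin.sum_univ_three]
      · simp [Matrix.mulVec, dotProduct, Fin.sum_univ_three]
    · intro h
      have h0 := congrFun h 0
      simp [Matrix.mulVec, dotProduct, Fin.sum_univ_three] at h0
      linear_combination h0
  have hm2 : Submodule.span ℂ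
      {Pi.single 0 1, (R2T p ρ 1 1).mulVec (Pi.single 2 1)} =
      LinearMap.ker (lfun 0 v (-1)) := by
    have hx : (R2T p ρ 1 1).mulVec (Pi.single 2 1) = ![0, 1, v] := by
      rw [R2T, hu, hv]
      ext i
      fin_cases i <;> simp
    rw [hx]
    ext y
    rw [Submodule.mem_span_pair, LinearMap.mem_ker]
    simp only [lfun, LinearMap.add_apply, LinearMap.smul_apply, LinearMap.proj_apply, smul_eq_mul]
    constructor
    · rintro ⟨a, b, rfl⟩
      simp
      ring
    · intro h
      refine ⟨y 0, y 1, ?_⟩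
      ext i
      fin_cases i
      · simp
      · simp
      · simp
        linear_combination h
  rw [hm2]
  clear hm2
  rw [R2T, hu, hv, hs] at hr₂
  rw [R3T, hu, hv, map_one, mul_one] at hr₃
  obtain ⟨A, hAd⟩ : ∃ A : GL (Fin 3) ℂ, r₂ * r₃ * r₂⁻¹ = A := ⟨_, rfl⟩
  have hAb : A * r₂ = r₂ * r₃ := by rw [← hAd]; group
  have hA : (A : Matrix (Fin 3) (Fin 3) ℂ) =
      !![v, 0, 0; u * (1 - s), 0, u ^ 3; 1 - s, -v ^ 2, v + u ^ 2] := by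
    have hc : !![v, 0, 0; u * (1 - s), 0, u ^ 3; 1 - s, -v ^ 2, v + u ^ 2] *
        (r₂ : Matrix (Fin 3) (Fin 3) ℂ) = r₂ * r₃ := by
      rw [hr₂, hr₃]
      ext i j
      fin_cases i <;> fin_cases j <;>
        simp [Matrix.mul_apply, Fin.sum_univ_three] <;> grind
    rw [← hAd]
    simp only [Units.val_mul]
    rw [← hc, mul_assoc, ← Units.val_mul, mul_inv_cancel, Units.val_one, mul_one]
  have h23 : r₂ * r₃ * r₂ = r₃ * r₂ * r₃ := by
    apply Units.ext
    simp only [Units.val_mul, hr₂, hr₃]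
    ext i j
    fin_cases i <;> fin_cases j <;>
      simp [Matrix.mul_apply, Fin.sum_univ_three] <;> grind
  have h13 : r₁ * r₃ * r₁ = r₃ * r₁ * r₃ := by
    apply Units.ext
    simp only [Units.val_mul, hr₁, hr₃]
    ext i j
    fin_cases i <;> fin_cases j <;>
      simp [Matrix.mul_apply, Fin.sum_univ_three] <;> grind
  have h12 : r₁ * r₂ * r₁ * r₂ = r₂ * r₁ * r₂ * r₁ := by
    apply Units.ext
    simp only [Units.val_mul, hr₁, hr₂]
    ext i j
    fin_cases i <;> fin_cases j <;>
      simp [Matrix.mul_apply, Fin.sum_univ_three] <;> grind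
  have h5 : r₁ * A * r₁ * A * r₁ = A * r₁ * A * r₁ * A := by
    apply Units.ext
    simp only [Units.val_mul]
    exact braid5_aux u v ρ s huv h1 h2 _ _ hr₁ hA
  obtain ⟨c1, c2, e3, e2⟩ := braid_group_aux r₁ r₂ r₃ A hAb h23 h13 h12 h5
  have k1 : r₁ ∈ Subgroup.closure {r₁, r₂, r₃} := Subgroup.subset_closure (by simp)
  have k2 : r₂ ∈ Subgroup.closure {r₁, r₂, r₃} := Subgroup.subset_closure (by simp)
  have k3 : r₃ ∈ Subgroup.closure {r₁, r₂, r₃} := Subgroup.subset_closure (by simp)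
  have kA : A ∈ Subgroup.closure {r₁, r₂, r₃} := by
    rw [← hAd]; exact mul_mem (mul_mem k2 k3) (inv_mem k2)
  generalize hT : Subgroup.closure {r₁, r₂, r₃} = T at *
  apply le_antisymm
  · rw [Subgroup.closure_le]
    rintro g (hg | hg)
    · exact hg.1
    · exact hg.1
  · generalize hK : Subgroup.closure (_ : Set (GL (Fin 3) ℂ)) = K
    have q1 : r₁ ∈ K := by
      rw [← hK]
      exact Subgroup.subset_closure (Or.inl ⟨k1, map_eig_aux r₁ r₁ v _ hm1 (Commute.refl _)⟩)
    have qS : r₁ * A * r₁ * A * r₁ * (r₂ * r₁ * r₃) ∈ K := by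
      rw [← hK]
      refine Subgroup.subset_closure (Or.inl ⟨?_, map_eig_aux r₁ _ v _ hm1 c1⟩)
      exact mul_mem (mul_mem (mul_mem (mul_mem (mul_mem k1 kA) k1) kA) k1)
        (mul_mem (mul_mem k2 k1) k3)
    have qB : r₂ * r₁ * r₂ ∈ K := by
      rw [← hK]
      refine Subgroup.subset_closure (Or.inl ⟨?_, map_eig_aux r₁ _ v _ hm1 c2⟩)
      exact mul_mem (mul_mem k2 k1) k2
    have qA : A ∈ K := by
      rw [← hK]
      refine Subgroup.subset_closure (Or.inr ⟨kA, map_ker_aux _ _ v hv0 ?_⟩)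
      intro x
      rw [hA]
      simp [lfun, Matrix.mulVec, dotProduct, Fin.sum_univ_three]
      grind
    have qc : r₂ * r₁ * r₃ ∈ K :=
      (Subgroup.mul_mem_cancel_left K
        (mul_mem (mul_mem (mul_mem (mul_mem q1 qA) q1) qA) q1)).mp qS
    have q3 : r₃ ∈ K := by
      rw [e3]; exact mul_mem (mul_mem (inv_mem qB) qc) qA
    have q2 : r₂ ∈ K := by
      rw [e2]; exact mul_mem (mul_mem q3 qA) (inv_mem q3)
    rw [← hT, Subgroup.closure_le]
    rintro g (rfl | rfl | rfl)
    · exact q1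
    · exact q2
    · exact q3
end
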